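/- Let k be a field and S = k[x₁,…,xₙ]. If 𝓘 is an infinite collection of artinian monomial ideals of S (monomial ideals I such that S/I is a finite-dimensional k-vector space, equivalently I contains a power of each variable), then there are two distinct ideals I, J ∈ 𝓘 with I ⊆ J. -/

import Mathlib

/-- An ideal of `k[x₁,…,xₙ]` is a *monomial ideal* if it is generated by a set of
monomials `x^u` with `u ∈ ℕⁿ`. -/
def IsMonomialIdeal {k : Type*} [Field k] {n : ℕ}
    (I : Ideal (MvPolynomial (Fin n) k)) : Prop :=
  ∃ U : Set (Fin n →₀ ℕ),
    I = Ideal.span ((fun u => MvPolynomial.monomial u (1 : k)) '' U)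

/-!
A monomial ideal is determined by its standard monomials, the exponents of the monomials outside
it; these form a lower set of `ℕⁿ`, and inclusion of ideals reverses inclusion of lower sets. The
standard monomials are linearly independent modulo the ideal, so artinian monomial ideals correspond
to finite lower sets. By Dickson's lemma `ℕⁿ` is well quasi-ordered, and by Higman's lemma so are
the finite sequences in it under domination of a subsequence. Listing the elements of finite lower
sets, domination becomes inclusion, so artinian monomial ideals are well quasi-ordered by `≥`.
-/

open MvPolynomial

section Order

variable {α β : Type*}

theorem exists_mem_of_sublistForall₂ {r : α → β → Prop} {l : List α} {m : List β}
    (h : List.SublistForall₂ r l m) {a : α} (ha : a ∈ l) : ∃ b ∈ m, r a b := by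
  induction h with
  | nil => cases ha
  | cons hr _ ih =>
    obtain rfl | ha := List.mem_cons.1 ha
    · exact ⟨_, List.mem_cons_self, hr⟩
    · exact (ih ha).imp fun _ hb => hb.imp_left (List.mem_cons_of_mem _)
  | cons_right _ ih => exact (ih ha).imp fun _ hb => hb.imp_left (List.mem_cons_of_mem _)

theorem wellQuasiOrdered_finset_forall_exists {r : α → α → Prop} [IsPreorder α r]
    (hr : WellQuasiOrdered r) :
    WellQuasiOrdered fun s t : Finset α => ∀ a ∈ s, ∃ b ∈ t, r a b := by
  intro f
  have higman := (Set.partiallyWellOrderedOn_univ_iff.2 hr).partiallyWellOrderedOn_sublistForall₂ r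
  obtain ⟨i, j, hij, h⟩ := higman.exists_lt (f := fun n => (f n).toList) fun _ _ _ => Set.mem_univ _
  refine ⟨i, j, hij, fun a ha => ?_⟩
  simpa only [Finset.mem_toList] using exists_mem_of_sublistForall₂ h (Finset.mem_toList.2 ha)

theorem isPWO_setOf_finite_lowerSet [Preorder α] [WellQuasiOrderedLE α] :
    {s : LowerSet α | (s : Set α).Finite}.IsPWO := by
  intro f
  obtain ⟨i, j, hij, h⟩ := wellQuasiOrdered_finset_forall_exists (α := α) wellQuasiOrdered_le
    fun n => (f n).2.toFinset
  refine ⟨i, j, hij, fun a ha => ?_⟩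
  obtain ⟨b, hb, hab⟩ := h a ((f i).2.mem_toFinset.2 ha)
  exact (f j).1.lower hab ((f j).2.mem_toFinset.1 hb)

end Order

section CommSemiring

variable {σ R : Type*} [CommSemiring R]

variable (R) in
/-- The monomial ideal of `R[x_i : i ∈ σ]` generated by the monomials with exponents in `U`. For
finitely many variables over a field, its values are the ideals satisfying `IsMonomialIdeal`. -/
noncomputable def monomialIdeal (U : Set (σ →₀ ℕ)) : Ideal (MvPolynomial σ R) :=
  Ideal.span ((fun u => monomial u (1 : R)) '' U)

/-- The standard monomials of an ideal `I`, those not lying in `I`, encoded as the lower set of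
their exponents. -/
def standardMonomials (I : Ideal (MvPolynomial σ R)) : LowerSet (σ →₀ ℕ) where
  carrier := {u | monomial u (1 : R) ∉ I}
  lower' _ _ hvu hu hv := hu (I.mem_of_dvd (monomial_dvd_monomial.2 ⟨.inr hvu, dvd_rfl⟩) hv)

theorem monomial_mem_monomialIdeal {U : Set (σ →₀ ℕ)} {u : σ →₀ ℕ} (hu : u ∈ U) :
    monomial u (1 : R) ∈ monomialIdeal R U :=
  Ideal.subset_span (Set.mem_image_of_mem _ hu)

theorem monomialIdeal_le_iff {U : Set (σ →₀ ℕ)} {J : Ideal (MvPolynomial σ R)} :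
    monomialIdeal R U ≤ J ↔ standardMonomials J ≤ standardMonomials (monomialIdeal R U) := by
  refine ⟨fun h _ hu hI => hu (h hI), fun h => Ideal.span_le.2 ?_⟩
  rintro _ ⟨u, hu, rfl⟩
  by_contra huJ
  exact h huJ (monomial_mem_monomialIdeal hu)

theorem disjoint_restrictSupport_standardMonomials (U : Set (σ →₀ ℕ)) :
    Disjoint (restrictSupport R (standardMonomials (monomialIdeal R U) : Set (σ →₀ ℕ)))
      ((monomialIdeal R U).restrictScalars R) := by
  refine Submodule.disjoint_def.2 fun p hstd hp => support_eq_empty.1 ?_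
  refine Finset.eq_empty_of_forall_notMem fun u hu => ?_
  obtain ⟨v, hv, hvu⟩ := mem_ideal_span_monomial_image.1 hp u hu
  have hv_std : v ∈ standardMonomials (monomialIdeal R U) := LowerSet.lower _ hvu (hstd hu)
  exact hv_std (monomial_mem_monomialIdeal hv)

end CommSemiring

section CommRing

variable {σ R : Type*} [CommRing R]

theorem linearIndependent_mk_standardMonomials (U : Set (σ →₀ ℕ)) :
    LinearIndependent R fun u : standardMonomials (monomialIdeal R U) =>
      Ideal.Quotient.mkₐ R (monomialIdeal R U) (monomial (u : σ →₀ ℕ) 1) := by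
  have hmon : LinearIndependent R fun u : standardMonomials (monomialIdeal R U) =>
      monomial (u : σ →₀ ℕ) (1 : R) := by
    simpa only [coe_basisMonomials] using!
      (basisMonomials σ R).linearIndependent.comp _ Subtype.val_injective
  refine hmon.map (f := (Ideal.Quotient.mkₐ R (monomialIdeal R U)).toLinearMap) ?_
  convert disjoint_restrictSupport_standardMonomials (R := R) U
  · rw [restrictSupport_eq_span, Set.image_eq_range]
    rfl
  · ext p
    exact Ideal.Quotient.eq_zero_iff_mem

theorem finite_standardMonomials [Nontrivial R] (U : Set (σ →₀ ℕ))
    [Module.Finite R (MvPolynomial σ R ⧸ monomialIdeal R U)] :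
    (standardMonomials (monomialIdeal R U) : Set (σ →₀ ℕ)).Finite :=
  (linearIndependent_mk_standardMonomials U).finite

theorem artinian_monomialIdeals_no_infinite_antichain_general [Finite σ] [Nontrivial R] :
    {I : Ideal (MvPolynomial σ R) | (∃ U, I = monomialIdeal R U) ∧
      Module.Finite R (MvPolynomial σ R ⧸ I)}.PartiallyWellOrderedOn (· ≥ ·) := by
  rw [Set.partiallyWellOrderedOn_iff_exists_lt]
  intro f hf
  choose U hU using fun n => (hf n).1
  have hfin n : (standardMonomials (f n) : Set (σ →₀ ℕ)).Finite := by
    have := (hf n).2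
    rw [hU n] at this ⊢
    exact finite_standardMonomials (U n)
  obtain ⟨i, j, hij, hle⟩ := isPWO_setOf_finite_lowerSet.exists_lt hfin
  rw [hU j] at hle
  exact ⟨i, j, hij, (hU j).trans_le (monomialIdeal_le_iff.2 hle)⟩

end CommRing

/-- **Antichains of artinian monomial ideals are finite.**  If `𝓘` is an infinite
collection of artinian monomial ideals of `k[x₁,…,xₙ]` (monomial ideals `I` with
`S/I` finite-dimensional over `k`), then there are two distinct ideals
`I, J ∈ 𝓘` with `I ⊆ J`. -/
theorem artinian_monomialIdeals_no_infinite_antichain {k : Type*} [Field k]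
    {n : ℕ} (𝓘 : Set (Ideal (MvPolynomial (Fin n) k)))
    (hmono : ∀ I ∈ 𝓘, IsMonomialIdeal I)
    (hart : ∀ I ∈ 𝓘, Module.Finite k (MvPolynomial (Fin n) k ⧸ I))
    (hinf : 𝓘.Infinite) :
    ∃ I ∈ 𝓘, ∃ J ∈ 𝓘, I ≠ J ∧ I ≤ J := by
  by_contra! h
  refine hinf (IsAntichain.finite_of_partiallyWellOrderedOn (r := (· ≥ ·)) ?_ <|
    artinian_monomialIdeals_no_infinite_antichain_general.mono fun I hI => ⟨hmono I hI, hart I hI⟩)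
  exact fun I hI J hJ hne => h J hJ I hI hne.symm
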